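/- arXiv:0801.3946 — 3 statements merged into one kernel-verified Lean document; each statement's English description precedes it below -/
import Mathlib

section
/- Let F be a finite field with q elements. Then the number of matrices g in GL₂(F) with tr(g) = 0 equals q²(q−1), and for every nonzero element r of F the number of matrices g in GL₂(F) with tr(g) = r equals q(q² − q − 1). -/
/-!
The singular matrices are easier to count. A `2 × 2` matrix of trace `r` with top row `(a, b)` and
lower left entry `c` has determinant `a * (r - a) - b * c`, so for each `a` the matrices with
determinant `d` form a hyperbola `b * c = a * (r - a) - d`. It has `q - 1` points, and `q` more
when it degenerates into two lines, that is when `a` is a root of `X ^ 2 - r * X + d`. For `d = 0`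
these roots are `0` and `r`, and subtracting from the `q ^ 3` matrices of trace `r` leaves the
invertible ones.
-/

theorem natCard_mul_eq {G₀ : Type*} [GroupWithZero G₀] [Finite G₀] [DecidableEq G₀] (t : G₀) :
    Nat.card {p : G₀ × G₀ // p.1 * p.2 = t} =
      (Nat.card G₀ - 1) + if t = 0 then Nat.card G₀ else 0 := by
  have := Fintype.ofFinite G₀
  have card_of_ne_zero (b : G₀) (hb : b ≠ 0) : Nat.card {c : G₀ // b * c = t} = 1 := by
    simp only [← eq_inv_mul_iff_mul_eq₀ hb, Nat.card_unique]
  have card_of_zero : Nat.card {c : G₀ // 0 * c = t} = if t = 0 then Nat.card G₀ else 0 := by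
    split_ifs with ht
    · simp [ht]
    · simp [Ne.symm ht]
  calc Nat.card {p : G₀ × G₀ // p.1 * p.2 = t}
      = ∑ b : G₀, Nat.card {c : G₀ // b * c = t} := by
        rw [Nat.card_congr (Equiv.subtypeProdEquivSigmaSubtype fun b c ↦ b * c = t), Nat.card_sigma]
    _ = ∑ b ∈ Finset.univ.erase (0 : G₀), 1 + Nat.card {c : G₀ // 0 * c = t} := by
        rw [← Finset.sum_erase_add _ _ (Finset.mem_univ (0 : G₀))]
        congr 1
        exact Finset.sum_congr rfl fun b hb ↦ card_of_ne_zero b (Finset.ne_of_mem_erase hb)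
    _ = (Nat.card G₀ - 1) + if t = 0 then Nat.card G₀ else 0 := by
        rw [card_of_zero, Finset.sum_const, Finset.card_erase_of_mem (Finset.mem_univ 0),
          Finset.card_univ, smul_eq_mul, mul_one, Nat.card_eq_fintype_card]

/-- Coordinates `(a, b, c)` on the `2 × 2` matrices `!![a, b; c, r - a]` of trace `r`. -/
def traceFiberEquiv {R : Type*} [AddCommGroup R] (r : R) :
    {A : Matrix (Fin 2) (Fin 2) R // A.trace = r} ≃ R × R × R where
  toFun A := (A.1 0 0, A.1 0 1, A.1 1 0)
  invFun p := ⟨!![p.1, p.2.1; p.2.2, r - p.1], by simp [Matrix.trace_fin_two]⟩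
  left_inv := by
    rintro ⟨A, rfl⟩
    ext i j
    fin_cases i <;> fin_cases j <;> simp [Matrix.trace_fin_two]
  right_inv _ := rfl

theorem natCard_matrix_fin_two_trace_eq {R : Type*} [AddCommGroup R] (r : R) :
    Nat.card {A : Matrix (Fin 2) (Fin 2) R // A.trace = r} = Nat.card R ^ 3 := by
  rw [Nat.card_congr (traceFiberEquiv r), Nat.card_prod, Nat.card_prod]
  ring

theorem det_fin_two_eq_iff_of_trace_eq {R : Type*} [CommRing R] {r : R}
    {A : Matrix (Fin 2) (Fin 2) R} (hA : A.trace = r) (d : R) :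
    A.det = d ↔ A 0 1 * A 1 0 = A 0 0 * (r - A 0 0) - d := by
  rw [← hA, Matrix.det_fin_two, Matrix.trace_fin_two, add_sub_cancel_left, sub_eq_iff_eq_add',
    eq_comm, ← eq_sub_iff_add_eq]

/-- The `2 × 2` matrices of trace `r` and determinant `d`, fibred over their upper left entry `a`;
the fibre consists of the off-diagonal entries. -/
def traceDetFiberEquiv {R : Type*} [CommRing R] (r d : R) :
    {A : Matrix (Fin 2) (Fin 2) R // A.trace = r ∧ A.det = d} ≃
      Σ a : R, {p : R × R // p.1 * p.2 = a * (r - a) - d} :=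
  (Equiv.subtypeSubtypeEquivSubtypeInter _ _).symm.trans <|
    ((traceFiberEquiv r).subtypeEquiv fun A ↦ det_fin_two_eq_iff_of_trace_eq A.2 d).trans <|
      Equiv.subtypeProdEquivSigmaSubtype fun a (p : R × R) ↦ p.1 * p.2 = a * (r - a) - d

theorem natCard_matrix_fin_two_trace_eq_and_det_eq {F : Type*} [Field F] [Finite F] (r d : F) :
    Nat.card {A : Matrix (Fin 2) (Fin 2) F // A.trace = r ∧ A.det = d} =
      Nat.card F * (Nat.card F - 1) + Nat.card F * {a : F | a * (r - a) = d}.ncard := by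
  classical
  have := Fintype.ofFinite F
  rw [Nat.card_congr (traceDetFiberEquiv r d), Nat.card_sigma]
  simp only [natCard_mul_eq, sub_eq_zero, Finset.sum_add_distrib, Finset.sum_const,
    Finset.card_univ, smul_eq_mul, ← Finset.sum_filter, ← Nat.card_eq_fintype_card]
  rw [Set.ncard_eq_toFinset_card', Set.toFinset_ofPred, mul_comm (Finset.card _)]

theorem natCard_units_add_natCard_not_isUnit {M : Type*} [Monoid M] [Finite M] (p : M → Prop) :
    Nat.card {u : Mˣ // p u} + Nat.card {x : M // p x ∧ ¬IsUnit x} = Nat.card {x : M // p x} := by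
  have image_val : Units.val '' {u : Mˣ | p u} = {x | p x} ∩ {x | IsUnit x} := by
    ext x
    constructor
    · rintro ⟨u, hu, rfl⟩
      exact ⟨hu, u.isUnit⟩
    · rintro ⟨hx, u, rfl⟩
      exact ⟨u, hx, rfl⟩
  have card_units := Set.ncard_image_of_injective {u : Mˣ | p u} Units.val_injective
  rw [image_val] at card_units
  have card_split := Set.ncard_inter_add_ncard_sdiff_eq_ncard {x | p x} {x : M | IsUnit x}
  rwa [card_units] at card_split

theorem setOf_mul_sub_eq_zero {R : Type*} [NonUnitalNonAssocRing R] [NoZeroDivisors R] (r : R) :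
    {a : R | a * (r - a) = 0} = {0, r} := by
  ext a
  simp [sub_eq_zero, eq_comm (a := r)]

theorem natCard_gl_two_trace_add {F : Type*} [Field F] [Finite F] (r : F) :
    Nat.card {g : GL (Fin 2) F // Matrix.trace (g : Matrix (Fin 2) (Fin 2) F) = r} +
        (Nat.card F * (Nat.card F - 1) + Nat.card F * ({0, r} : Set F).ncard) =
      Nat.card F ^ 3 := by
  have singular_iff (A : Matrix (Fin 2) (Fin 2) F) : A.det = 0 ↔ ¬IsUnit A := by
    rw [Matrix.isUnit_iff_isUnit_det, isUnit_iff_ne_zero, not_not]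
  rw [← setOf_mul_sub_eq_zero, ← natCard_matrix_fin_two_trace_eq_and_det_eq,
    ← natCard_matrix_fin_two_trace_eq r]
  simp only [singular_iff]
  exact natCard_units_add_natCard_not_isUnit (Matrix.trace · = r)

/-- Let `F` be a finite field with `q` elements. The number of matrices `g ∈ GL₂(F)` with
`tr g = 0` equals `q²(q−1)`, and for every nonzero `r ∈ F` the number of `g ∈ GL₂(F)` with
`tr g = r` equals `q(q² − q − 1)`. -/
theorem gl2_trace_count (F : Type*) [Field F] [Fintype F] (q : ℕ) (hq : Fintype.card F = q) :
    Nat.card {g : GL (Fin 2) F // Matrix.trace (g : Matrix (Fin 2) (Fin 2) F) = 0}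
      = q ^ 2 * (q - 1) ∧
    ∀ r : F, r ≠ 0 →
      Nat.card {g : GL (Fin 2) F // Matrix.trace (g : Matrix (Fin 2) (Fin 2) F) = r}
        = q * (q ^ 2 - q - 1) := by
  have count (r : F) := natCard_gl_two_trace_add r
  simp only [Nat.card_eq_fintype_card (α := F), hq] at count
  have one_le_q : 1 ≤ q := hq ▸ Fintype.card_pos
  have q_add_one_le : q + 1 ≤ q ^ 2 := by
    have : 1 < q := hq ▸ Fintype.one_lt_card
    nlinarith
  refine ⟨?_, fun r hr ↦ ?_⟩
  · have h := count 0
    rw [Set.pair_eq_singleton, Set.ncard_singleton] at h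
    zify [one_le_q] at h ⊢
    linear_combination h
  · have h := count r
    rw [Set.ncard_pair hr.symm] at h
    rw [Nat.sub_sub]
    zify [one_le_q, q_add_one_le] at h ⊢
    linear_combination h
end

section
/- There are absolute constants c > 0 and C > 0 such that for every real x ≥ 16 and every real r with r² ≤ 4x one has c · (4x − r²)^{3/2} / (x log x) ≤ ∫_{max(2, r²/4)}^{x} √(1 − r²/(4t)) / (2√t · log t) dt ≤ C · (4x − r²)^{3/2} / (x log x). -/
/-!
Put `a = r ^ 2 / 4` and let `m` be the lower end of the integral. For `0 ≤ a ≤ m` and `2 ≤ m ≤ x`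
the integral over `[m, x]` has order `(x - m) * √(x - a) / (x * log x)`.
From below, the integrand `√(t - a) / (2 * t * log t)` is at least `√(t - a) / (2 * x * log x)`,
and `√(t - a)` integrates exactly. From above, `√(1 - a / t) ≤ √(1 - a / x)`, and passing from
`log t` to `log x` costs only a small power of `x / t`, which leaves an integrable power of `t`.
When `m = max 2 a` and `x` stays away from `2`, the lengths `x - m` and `x - a` are comparable.
-/

open Real Set MeasureTheory

theorem integral_rpow_le_mul_sub {m x p : ℝ} (hm : 0 < m) (hmx : m ≤ x) (hp : -1 < p)
    (hp0 : p ≤ 0) : ∫ t in m..x, t ^ p ≤ x ^ p * (x - m) / (p + 1) := by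
  have hx : 0 < x := hm.trans_le hmx
  have hanti : x ^ p * m ≤ m ^ p * m :=
    mul_le_mul_of_nonneg_right (rpow_le_rpow_of_nonpos hm hmx hp0) hm.le
  rw [integral_rpow (.inl hp), rpow_add_one hx.ne', rpow_add_one hm.ne']
  have : 0 ≤ p + 1 := by linarith
  gcongr
  linarith

theorem mul_sub_le_integral_rpow {m x p : ℝ} (hm : 0 ≤ m) (hmx : m ≤ x) (hp : 0 ≤ p) :
    x ^ p * (x - m) / (p + 1) ≤ ∫ t in m..x, t ^ p := by
  have hmono : m ^ p * m ≤ x ^ p * m := by gcongr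
  have hp1 : p + 1 ≠ 0 := by linarith
  rw [integral_rpow (.inl (by linarith)), rpow_add_one' (hm.trans hmx) hp1, rpow_add_one' hm hp1]
  gcongr
  linarith

theorem log_le_mul_rpow_div_mul_log {s t x : ℝ} (hs : 0 < s) (ht : 1 < t) (htx : t ≤ x) :
    log x ≤ (1 + 1 / (s * log t)) * (x / t) ^ s * log t := by
  have ht0 : 0 < t := by linarith
  have hlog : 0 < log t := log_pos ht
  have hone : 1 ≤ (x / t) ^ s := one_le_rpow ((one_le_div ht0).2 htx) hs.le
  calc
    log x = log t + log (x / t) := by rw [log_div (by linarith) ht0.ne']; ring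
    _ ≤ (x / t) ^ s * log t + (x / t) ^ s / s := by
      gcongr
      · exact le_mul_of_one_le_left hlog.le hone
      · exact log_le_rpow_div (div_nonneg (by linarith) ht0.le) hs
    _ = (1 + 1 / (s * log t)) * (x / t) ^ s * log t := by field_simp

theorem inv_rpow_mul_log_le {m q s t x : ℝ} (hs : 0 < s) (hm : 1 < m) (hmt : m ≤ t)
    (htx : t ≤ x) :
    (t ^ q * log t)⁻¹ ≤ (1 + 1 / (s * log m)) * x ^ s / log x * t ^ (-(q + s)) := by
  have ht : 1 < t := hm.trans_le hmt
  have ht0 : 0 < t := by linarith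
  have hx0 : 0 < x := ht0.trans_le htx
  have hlogm : 0 < log m := log_pos hm
  have hlogt : 0 < log t := log_pos ht
  have hlogx : 0 < log x := log_pos (ht.trans_le htx)
  have hlog : log x ≤ (1 + 1 / (s * log m)) * (x / t) ^ s * log t :=
    (log_le_mul_rpow_div_mul_log hs ht htx).trans (by gcongr)
  calc
    (t ^ q * log t)⁻¹ = (log x / log t) / (t ^ q * log x) := by field_simp
    _ ≤ ((1 + 1 / (s * log m)) * (x / t) ^ s) / (t ^ q * log x) := by
      gcongr
      exact (div_le_iff₀ hlogt).2 hlog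
    _ = (1 + 1 / (s * log m)) * x ^ s / log x * t ^ (-(q + s)) := by
      rw [div_rpow hx0.le ht0.le, rpow_neg ht0.le, rpow_add ht0]
      field_simp

theorem intervalIntegrable_inv_rpow_mul_log {m q x : ℝ} (hm : 1 < m) (hmx : m ≤ x) :
    IntervalIntegrable (fun t ↦ (t ^ q * log t)⁻¹) volume m x := by
  refine ContinuousOn.intervalIntegrable fun t ht ↦ ContinuousAt.continuousWithinAt ?_
  rw [uIcc_of_le hmx] at ht
  have ht0 : 0 < t := by linarith [ht.1]
  have hlog : 0 < log t := log_pos (hm.trans_le ht.1)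
  exact ((continuousAt_rpow_const t q (.inl ht0.ne')).mul (continuousAt_log ht0.ne')).inv₀
    (mul_pos (rpow_pos_of_pos ht0 q) hlog).ne'

theorem integral_inv_rpow_mul_log_le {m q s x : ℝ} (hs : 0 < s) (hqs : 0 ≤ q + s)
    (hqs1 : q + s < 1) (hm : 1 < m) (hmx : m ≤ x) :
    ∫ t in m..x, (t ^ q * log t)⁻¹ ≤
      (1 + 1 / (s * log m)) / (1 - (q + s)) * ((x - m) / (x ^ q * log x)) := by
  have hx0 : 0 < x := by linarith
  have hlogm : 0 < log m := log_pos hm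
  have hlogx : 0 < log x := log_pos (hm.trans_le hmx)
  set K := (1 + 1 / (s * log m)) * x ^ s / log x with hK
  calc
    ∫ t in m..x, (t ^ q * log t)⁻¹ ≤ ∫ t in m..x, K * t ^ (-(q + s)) :=
      intervalIntegral.integral_mono_on hmx (intervalIntegrable_inv_rpow_mul_log hm hmx)
        ((intervalIntegral.intervalIntegrable_rpow' (by linarith)).const_mul K)
        fun t ht ↦ inv_rpow_mul_log_le hs hm ht.1 ht.2
    _ ≤ K * (x ^ (-(q + s)) * (x - m) / (-(q + s) + 1)) := by
      rw [intervalIntegral.integral_const_mul]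
      gcongr
      exact integral_rpow_le_mul_sub (by linarith) hmx (by linarith) (by linarith)
    _ = (1 + 1 / (s * log m)) / (1 - (q + s)) * ((x - m) / (x ^ q * log x)) := by
      have hden : -(q + s) + 1 = 1 - (q + s) := by ring
      have hden0 : 1 - (q + s) ≠ 0 := by linarith
      rw [hK, hden, rpow_neg hx0.le, rpow_add hx0]
      field_simp

/-- The density in the main term of the refined Lang–Trotter conjecture without complex
multiplication, parametrized by `a = r ^ 2 / 4`, so that the correcting factor `√(1 - z ^ 2)` at
`z = r / (2 * √t)` is `√(1 - a / t)`. -/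
noncomputable def langTrotterDensity (a t : ℝ) : ℝ :=
  √(1 - a / t) / (2 * √t * log t)

theorem langTrotterDensity_eq_sqrt_sub_div {a t : ℝ} (ht : 0 < t) :
    langTrotterDensity a t = √(t - a) / (2 * t * log t) := by
  have hfactor : 1 - a / t = (t - a) / t := by field_simp
  have hden : √t * (2 * √t * log t) = 2 * t * log t := by
    linear_combination 2 * log t * mul_self_sqrt ht.le
  rw [langTrotterDensity, hfactor, sqrt_div' _ ht.le, div_div, hden]

theorem intervalIntegrable_langTrotterDensity {a m x : ℝ} (hm : 1 < m) (hmx : m ≤ x) :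
    IntervalIntegrable (langTrotterDensity a) volume m x := by
  refine ContinuousOn.intervalIntegrable fun t ht ↦ ContinuousAt.continuousWithinAt ?_
  rw [uIcc_of_le hmx] at ht
  have ht0 : 0 < t := by linarith [ht.1]
  have hlog : 0 < log t := log_pos (hm.trans_le ht.1)
  exact ContinuousAt.div (by fun_prop (disch := positivity)) (by fun_prop (disch := positivity))
    (by positivity)

theorem mul_sqrt_sub_le_integral_langTrotterDensity {a m x : ℝ} (ham : a ≤ m) (hm : 1 < m)
    (hmx : m ≤ x) :
    1 / 3 * ((x - m) * √(x - a) / (x * log x)) ≤ ∫ t in m..x, langTrotterDensity a t := by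
  have hx0 : 0 < x := by linarith
  have hlogx : 0 < log x := log_pos (hm.trans_le hmx)
  have hsqrt : √(x - a) * (x - m) / (3 / 2) ≤ ∫ t in m..x, √(t - a) := by
    have h := mul_sub_le_integral_rpow (sub_nonneg.2 ham) (sub_le_sub_right hmx a)
      (p := 1 / 2) (by norm_num)
    rw [← intervalIntegral.integral_comp_sub_right (fun t ↦ t ^ (1 / 2 : ℝ))] at h
    simp only [← sqrt_eq_rpow, sub_sub_sub_cancel_right] at h
    norm_num at h ⊢
    exact h
  calc
    1 / 3 * ((x - m) * √(x - a) / (x * log x))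
        = √(x - a) * (x - m) / (3 / 2) / (2 * x * log x) := by field_simp
    _ ≤ (∫ t in m..x, √(t - a)) / (2 * x * log x) := by gcongr
    _ = ∫ t in m..x, √(t - a) / (2 * x * log x) :=
      (intervalIntegral.integral_div _ _).symm
    _ ≤ ∫ t in m..x, langTrotterDensity a t := by
      refine intervalIntegral.integral_mono_on hmx
        (Continuous.intervalIntegrable (by fun_prop) m x)
        (intervalIntegrable_langTrotterDensity hm hmx) fun t ht ↦ ?_
      have ht0 : 0 < t := by linarith [ht.1]
      have hlogt : 0 < log t := log_pos (hm.trans_le ht.1)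
      rw [langTrotterDensity_eq_sqrt_sub_div ht0]
      gcongr
      exacts [ht.2, ht.2]

theorem integral_langTrotterDensity_le_mul_sqrt_sub {a m x : ℝ} (ha : 0 ≤ a) (hm : 1 < m)
    (hmx : m ≤ x) :
    ∫ t in m..x, langTrotterDensity a t ≤
      2 * (1 + 4 / log m) * ((x - m) * √(x - a) / (x * log x)) := by
  have hx0 : 0 < x := by linarith
  have hpointwise : ∀ t ∈ Icc m x,
      langTrotterDensity a t ≤ √(1 - a / x) / 2 * (t ^ (1 / 2 : ℝ) * log t)⁻¹ := by
    intro t ht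
    have ht0 : 0 < t := by linarith [ht.1]
    have hlogt : 0 < log t := log_pos (hm.trans_le ht.1)
    calc
      langTrotterDensity a t ≤ √(1 - a / x) / (2 * √t * log t) := by
        unfold langTrotterDensity
        gcongr
        exact ht.2
      _ = √(1 - a / x) / 2 * (t ^ (1 / 2 : ℝ) * log t)⁻¹ := by
        rw [← sqrt_eq_rpow]
        field_simp
  calc
    ∫ t in m..x, langTrotterDensity a t
        ≤ ∫ t in m..x, √(1 - a / x) / 2 * (t ^ (1 / 2 : ℝ) * log t)⁻¹ :=
      intervalIntegral.integral_mono_on hmx (intervalIntegrable_langTrotterDensity hm hmx)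
        ((intervalIntegrable_inv_rpow_mul_log hm hmx).const_mul _) hpointwise
    _ ≤ √(1 - a / x) / 2 * ((1 + 1 / (1 / 4 * log m)) / (1 - (1 / 2 + 1 / 4)) *
          ((x - m) / (x ^ (1 / 2 : ℝ) * log x))) := by
      rw [intervalIntegral.integral_const_mul]
      gcongr
      exact integral_inv_rpow_mul_log_le (by norm_num) (by norm_num) (by norm_num) hm hmx
    _ = 4 * (1 + 4 / log m) * (x - m) * langTrotterDensity a x := by
      rw [langTrotterDensity, ← sqrt_eq_rpow]
      ring
    _ = 2 * (1 + 4 / log m) * ((x - m) * √(x - a) / (x * log x)) := by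
      rw [langTrotterDensity_eq_sqrt_sub_div hx0]
      ring

theorem mul_sub_le_sub_max {a b x x₀ : ℝ} (ha : 0 ≤ a) (hax : a ≤ x) (hb : 0 ≤ b)
    (hx₀ : 0 < x₀) (hbx₀ : b ≤ x₀) (hx : x₀ ≤ x) : (1 - b / x₀) * (x - a) ≤ x - max b a := by
  have hfrac : b / x₀ ≤ 1 := (div_le_one hx₀).2 hbx₀
  have hbx : b ≤ b / x₀ * x := by
    rw [div_mul_eq_mul_div, le_div_iff₀ hx₀]
    gcongr
  rw [le_sub_comm, max_le_iff]
  constructor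
  · linarith [mul_le_mul_of_nonneg_right hfrac ha]
  · linarith [mul_nonneg (div_nonneg hb hx₀.le) (sub_nonneg.2 hax)]

theorem le_integral_langTrotterDensity_max {a b x x₀ : ℝ} (ha : 0 ≤ a) (hax : a ≤ x) (hb : 1 < b)
    (hbx₀ : b ≤ x₀) (hx : x₀ ≤ x) :
    (1 - b / x₀) / 3 * ((x - a) * √(x - a) / (x * log x)) ≤
      ∫ t in (max b a)..x, langTrotterDensity a t := by
  have hx0 : 0 < x := by linarith
  have hlogx : 0 < log x := log_pos (by linarith)
  calc
    (1 - b / x₀) / 3 * ((x - a) * √(x - a) / (x * log x))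
        = 1 / 3 * ((1 - b / x₀) * (x - a) * √(x - a) / (x * log x)) := by ring
    _ ≤ 1 / 3 * ((x - max b a) * √(x - a) / (x * log x)) := by
      gcongr
      exact mul_sub_le_sub_max ha hax (by linarith) (by linarith) hbx₀ hx
    _ ≤ ∫ t in (max b a)..x, langTrotterDensity a t :=
      mul_sqrt_sub_le_integral_langTrotterDensity (le_max_right b a) (lt_max_of_lt_left hb)
        (max_le (hbx₀.trans hx) hax)

theorem integral_langTrotterDensity_max_le {a b x : ℝ} (ha : 0 ≤ a) (hax : a ≤ x) (hb : 1 < b)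
    (hbx : b ≤ x) :
    ∫ t in (max b a)..x, langTrotterDensity a t ≤
      2 * (1 + 4 / log b) * ((x - a) * √(x - a) / (x * log x)) := by
  have hx0 : 0 < x := by linarith
  have hlogx : 0 < log x := log_pos (by linarith)
  have hlogb : 0 < log b := log_pos hb
  have hmx : 0 ≤ x - max b a := sub_nonneg.2 (max_le hbx hax)
  calc
    ∫ t in (max b a)..x, langTrotterDensity a t
        ≤ 2 * (1 + 4 / log (max b a)) * ((x - max b a) * √(x - a) / (x * log x)) :=
      integral_langTrotterDensity_le_mul_sqrt_sub ha (lt_max_of_lt_left hb) (max_le hbx hax)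
    _ ≤ 2 * (1 + 4 / log b) * ((x - a) * √(x - a) / (x * log x)) := by
      gcongr
      exacts [le_max_left b a, le_max_right b a]

theorem four_mul_rpow_three_halves {d : ℝ} (hd : 0 ≤ d) :
    (4 * d) ^ ((3 : ℝ) / 2) = 8 * (d * √d) := by
  have hexp : (3 : ℝ) / 2 = 1 + 1 / 2 := by norm_num
  have hsqrt : √(4 * d) = 2 * √d := by
    rw [sqrt_mul (by norm_num), show (4 : ℝ) = 2 ^ 2 by norm_num, sqrt_sq (by norm_num)]
  rw [hexp, rpow_add_of_nonneg (by positivity) (by norm_num) (by norm_num), rpow_one,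
    ← sqrt_eq_rpow, hsqrt]
  ring

theorem refined_main_term_order_nonCM_general {x₀ : ℝ} (hx₀ : 2 < x₀) :
    ∃ c C : ℝ, 0 < c ∧ 0 < C ∧ ∀ x : ℝ, x₀ ≤ x → ∀ r : ℝ, r ^ 2 ≤ 4 * x →
      c * (4 * x - r ^ 2) ^ ((3 : ℝ) / 2) / (x * log x)
        ≤ (∫ t in (max 2 (r ^ 2 / 4))..x, √(1 - r ^ 2 / (4 * t)) / (2 * √t * log t)) ∧
      (∫ t in (max 2 (r ^ 2 / 4))..x, √(1 - r ^ 2 / (4 * t)) / (2 * √t * log t))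
        ≤ C * (4 * x - r ^ 2) ^ ((3 : ℝ) / 2) / (x * log x) := by
  have hc : 0 < 1 - 2 / x₀ := sub_pos.2 ((div_lt_one (by linarith)).2 hx₀)
  refine ⟨(1 - 2 / x₀) / 24, (1 + 4 / log 2) / 4, by positivity, by positivity, fun x hx r hr ↦ ?_⟩
  obtain ⟨a, ha⟩ : ∃ a, a = r ^ 2 / 4 := ⟨_, rfl⟩
  have ha0 : 0 ≤ a := by rw [ha]; positivity
  have hax : a ≤ x := by linarith
  have hdensity (t : ℝ) : √(1 - r ^ 2 / (4 * t)) / (2 * √t * log t) = langTrotterDensity a t := by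
    rw [langTrotterDensity, ha, div_div]
  have hpow : (4 * x - r ^ 2) ^ ((3 : ℝ) / 2) = 8 * ((x - a) * √(x - a)) := by
    rw [← four_mul_rpow_three_halves (sub_nonneg.2 hax), ha]
    ring_nf
  simp only [hdensity, hpow, ← ha]
  constructor
  · convert le_integral_langTrotterDensity_max ha0 hax one_lt_two hx₀.le hx using 1
    ring
  · convert integral_langTrotterDensity_max_le ha0 hax one_lt_two (by linarith) using 1
    ring

/-- There are absolute constants `c, C > 0` such that for all real `x ≥ 16` and real `r` with
`r² ≤ 4x`, `∫_{max(2,r²/4)}^x √(1 − r²/(4t))/(2√t log t) dt` is between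
`c (4x − r²)^{3/2}/(x log x)` and `C (4x − r²)^{3/2}/(x log x)`. -/
theorem refined_main_term_order_nonCM :
    ∃ c C : ℝ, 0 < c ∧ 0 < C ∧ ∀ x : ℝ, 16 ≤ x → ∀ r : ℝ, r ^ 2 ≤ 4 * x →
      c * (4 * x - r ^ 2) ^ ((3 : ℝ) / 2) / (x * Real.log x)
        ≤ (∫ t in (max 2 (r ^ 2 / 4))..x,
            Real.sqrt (1 - r ^ 2 / (4 * t)) / (2 * Real.sqrt t * Real.log t)) ∧
      (∫ t in (max 2 (r ^ 2 / 4))..x,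
          Real.sqrt (1 - r ^ 2 / (4 * t)) / (2 * Real.sqrt t * Real.log t))
        ≤ C * (4 * x - r ^ 2) ^ ((3 : ℝ) / 2) / (x * Real.log x) :=
  refined_main_term_order_nonCM_general (by norm_num)
end

section
/- There are absolute constants c > 0 and C > 0 such that for every real x ≥ 16 and every real r with r² ≤ 4x one has c · √(4x − r²) / log x ≤ ∫_{max(2, r²/4)}^{x} (1 − r²/(4t))^{−1/2} / (2√t · log t) dt ≤ C · √(4x − r²) / log x. -/
/-!
With `a = r² / 4` the integrand is `(t - a) ^ (-1/2) / (2 log t)`, so the claim is the case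
`s = 1/2` of `∫ (t - a) ^ (s - 1) / log t ≍ (x - a) ^ s / log x`. For the lower bound replace
`log t` by `log x`. For the upper bound use that the logarithm is slowly varying: `log x / log t` is
`O((x / t) ^ (s / 2))`, hence `O(((x - a) / (t - a)) ^ (s / 2))`, which costs half of the exponent
and leaves the singularity at `t = a` integrable.
-/

open Real Set MeasureTheory intervalIntegral

theorem log_le_mul_rpow_mul_log {ε b t x : ℝ} (hε : 0 < ε) (hb : 1 < b) (hbt : b ≤ t)
    (htx : t ≤ x) : log x ≤ (1 + 1 / (ε * log b)) * (x / t) ^ ε * log t := by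
  have ht : 0 < t := by linarith
  have hlogb : 0 < log b := log_pos hb
  have hlog : log b ≤ log t := log_le_log (by linarith) hbt
  have hratio : 1 ≤ x / t := (one_le_div ht).2 htx
  have hpow : 1 ≤ (x / t) ^ ε := one_le_rpow hratio hε.le
  calc log x = log t + log (x / t) := by
        rw [log_div (by linarith) ht.ne']; ring
    _ ≤ log t + (x / t) ^ ε / ε := by
        gcongr; exact log_le_rpow_div (by linarith) hε
    _ ≤ (x / t) ^ ε * log t + (x / t) ^ ε / ε * (log t / log b) := by
        gcongr
        · exact le_mul_of_one_le_left (by linarith) hpow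
        · exact le_mul_of_one_le_right (by positivity) ((one_le_div hlogb).2 hlog)
    _ = (1 + 1 / (ε * log b)) * (x / t) ^ ε * log t := by field_simp

theorem div_le_sub_div_sub {a t x : ℝ} (ha : 0 ≤ a) (hat : a < t) (htx : t ≤ x) :
    x / t ≤ (x - a) / (t - a) := by
  rw [div_le_div_iff₀ (by linarith) (by linarith)]
  nlinarith

theorem max_sub_le_div_mul_sub {a b x : ℝ} (ha : 0 ≤ a) (hax : a ≤ x) (hb : 0 < b)
    (hbx : b ≤ x) : max b a - a ≤ b / x * (x - a) := by
  have hx : 0 < x := by linarith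
  have hratio : b / x ≤ 1 := (div_le_one hx).2 hbx
  rw [sub_le_iff_le_add]
  refine max_le ?_ (le_add_of_nonneg_left (mul_nonneg (by positivity) (by linarith)))
  calc b = b / x * (x - a) + b / x * a := by field_simp; ring
    _ ≤ b / x * (x - a) + a := by gcongr; exact mul_le_of_le_one_left ha hratio

theorem one_sub_div_rpow_mul_rpow {a t : ℝ} (ht : 0 < t) (hat : a ≤ t) (p : ℝ) :
    (1 - a / t) ^ p * t ^ p = (t - a) ^ p := by
  rw [← mul_rpow (sub_nonneg.2 ((div_le_one ht).2 hat)) ht.le]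
  congr 1
  field_simp

theorem one_sub_div_rpow_neg_half_div_sqrt {a t : ℝ} (ht : 0 < t) (hat : a ≤ t) :
    (1 - a / t) ^ (-(1 : ℝ) / 2) / √t = (t - a) ^ (-(1 : ℝ) / 2) := by
  rw [← one_sub_div_rpow_mul_rpow ht hat, neg_div, rpow_neg ht.le, ← sqrt_eq_rpow, div_eq_mul_inv]

section SubRpow

variable {s : ℝ} (hs : 0 < s) (a A x : ℝ)

include hs

theorem intervalIntegrable_sub_rpow_sub_one :
    IntervalIntegrable (fun t ↦ (t - a) ^ (s - 1)) volume A x := by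
  simpa using (intervalIntegrable_rpow' (a := A - a) (b := x - a)
    (by linarith : -1 < s - 1)).comp_sub_right a

theorem integral_sub_rpow_sub_one :
    ∫ t in A..x, (t - a) ^ (s - 1) = ((x - a) ^ s - (A - a) ^ s) / s := by
  rw [integral_comp_sub_right (fun t ↦ t ^ (s - 1)) a, integral_rpow (Or.inl (by linarith)),
    sub_add_cancel]

end SubRpow

section SubRpowDivLog

variable {s a A x : ℝ} (hs : 0 < s)

include hs

theorem intervalIntegrable_sub_rpow_div_log (a : ℝ) (hA : 1 < A) (hx : 1 < x) :
    IntervalIntegrable (fun t ↦ (t - a) ^ (s - 1) / log t) volume A x := by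
  have hone : ∀ t ∈ uIcc A x, 1 < t := fun t ht ↦ (lt_min hA hx).trans_le ht.1
  simp only [div_eq_mul_inv]
  refine (intervalIntegrable_sub_rpow_sub_one hs a A x).mul_continuousOn (.inv₀ ?_ ?_)
  · exact continuousOn_log.mono fun t ht ↦ (zero_lt_one.trans (hone t ht)).ne'
  · exact fun t ht ↦ (log_pos (hone t ht)).ne'

theorem le_integral_sub_rpow_div_log (haA : a ≤ A) (hA : 1 < A) (hAx : A ≤ x) :
    ((x - a) ^ s - (A - a) ^ s) / s / log x ≤ ∫ t in A..x, (t - a) ^ (s - 1) / log t := by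
  rw [← integral_sub_rpow_sub_one hs, ← intervalIntegral.integral_div]
  refine integral_mono_on hAx ((intervalIntegrable_sub_rpow_sub_one hs a A x).div_const _)
    (intervalIntegrable_sub_rpow_div_log hs a hA (hA.trans_le hAx)) fun t ⟨hAt, htx⟩ ↦ ?_
  have hlog : 0 < log t := log_pos (hA.trans_le hAt)
  have hpow : 0 ≤ (t - a) ^ (s - 1) := rpow_nonneg (by linarith) _
  gcongr
  linarith

theorem sub_rpow_div_log_le {b t : ℝ} (ha : 0 ≤ a) (hat : a < t) (hb : 1 < b) (hbt : b ≤ t)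
    (htx : t ≤ x) :
    (t - a) ^ (s - 1) / log t ≤
      (1 + 2 / (s * log b)) * (x - a) ^ (s / 2) / log x * (t - a) ^ (s / 2 - 1) := by
  have hta : 0 < t - a := by linarith
  have hlogb : 0 < log b := log_pos hb
  have hlogt : 0 < log t := log_pos (by linarith)
  have hlogx : 0 < log x := log_pos (by linarith)
  have hlog : log x ≤ (1 + 2 / (s * log b)) * ((x - a) / (t - a)) ^ (s / 2) * log t :=
    calc log x ≤ (1 + 1 / (s / 2 * log b)) * (x / t) ^ (s / 2) * log t :=
          log_le_mul_rpow_mul_log (half_pos hs) hb hbt htx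
      _ = (1 + 2 / (s * log b)) * (x / t) ^ (s / 2) * log t := by congr 3; field_simp
      _ ≤ _ := by
          have : 0 ≤ x / t := div_nonneg (by linarith) (by linarith)
          gcongr _ * ?_ ^ _ * _
          exact div_le_sub_div_sub ha hat htx
  have hsplit : (t - a) ^ (s - 1) = (t - a) ^ (s / 2 - 1) * (t - a) ^ (s / 2) := by
    rw [← rpow_add hta]; ring_nf
  rw [div_rpow (by linarith) hta.le] at hlog
  rw [hsplit, div_le_iff₀ hlogt]
  calc (t - a) ^ (s / 2 - 1) * (t - a) ^ (s / 2)
      = (t - a) ^ (s / 2 - 1) * (t - a) ^ (s / 2) / log x * log x := by field_simp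
    _ ≤ (t - a) ^ (s / 2 - 1) * (t - a) ^ (s / 2) / log x *
          ((1 + 2 / (s * log b)) * ((x - a) ^ (s / 2) / (t - a) ^ (s / 2)) * log t) := by gcongr
    _ = _ := by field_simp

theorem integral_sub_rpow_div_log_le {b : ℝ} (ha : 0 ≤ a) (haA : a ≤ A) (hb : 1 < b)
    (hbA : b ≤ A) (hAx : A ≤ x) :
    ∫ t in A..x, (t - a) ^ (s - 1) / log t ≤
      2 / s * (1 + 2 / (s * log b)) * (x - a) ^ s / log x := by
  have hA : 1 < A := hb.trans_le hbA
  have hlogb : 0 < log b := log_pos hb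
  have hlogx : 0 < log x := log_pos (hA.trans_le hAx)
  have hxa : 0 ≤ x - a := by linarith
  have hAa : 0 ≤ (A - a) ^ (s / 2) := rpow_nonneg (by linarith) _
  calc ∫ t in A..x, (t - a) ^ (s - 1) / log t
      ≤ ∫ t in A..x,
          (1 + 2 / (s * log b)) * (x - a) ^ (s / 2) / log x * (t - a) ^ (s / 2 - 1) :=
        integral_mono_on_of_le_Ioo hAx
          (intervalIntegrable_sub_rpow_div_log hs a hA (hA.trans_le hAx))
          ((intervalIntegrable_sub_rpow_sub_one (half_pos hs) a A x).const_mul _)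
          fun t ⟨hAt, htx⟩ ↦
            sub_rpow_div_log_le hs ha (haA.trans_lt hAt) hb (hbA.trans hAt.le) htx.le
    _ = (1 + 2 / (s * log b)) * (x - a) ^ (s / 2) / log x *
          (((x - a) ^ (s / 2) - (A - a) ^ (s / 2)) / (s / 2)) := by
        rw [intervalIntegral.integral_const_mul, integral_sub_rpow_sub_one (half_pos hs)]
    _ ≤ (1 + 2 / (s * log b)) * (x - a) ^ (s / 2) / log x * ((x - a) ^ (s / 2) / (s / 2)) := by
        gcongr
        linarith
    _ = 2 / s * (1 + 2 / (s * log b)) * ((x - a) ^ (s / 2) * (x - a) ^ (s / 2)) / log x := by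
        field_simp
    _ = _ := by rw [← rpow_add_of_nonneg hxa (by positivity) (by positivity), add_halves]

theorem exists_integral_sub_rpow_div_log_bounds {b x₀ : ℝ} (hb : 1 < b) (hbx₀ : b < x₀) :
    ∃ c C : ℝ, 0 < c ∧ 0 < C ∧ ∀ x, x₀ ≤ x → ∀ a, 0 ≤ a → a ≤ x →
      c * (x - a) ^ s / log x ≤ ∫ t in max b a..x, (t - a) ^ (s - 1) / log t ∧
      ∫ t in max b a..x, (t - a) ^ (s - 1) / log t ≤ C * (x - a) ^ s / log x := by
  have hb₀ : 0 < b := by linarith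
  have hx₀ : 0 < x₀ := by linarith
  have hlogb : 0 < log b := log_pos hb
  have hpow : (b / x₀) ^ s < 1 := rpow_lt_one (by positivity) ((div_lt_one hx₀).2 hbx₀) hs
  refine ⟨(1 - (b / x₀) ^ s) / s, 2 / s * (1 + 2 / (s * log b)), div_pos (by linarith) hs,
    by positivity, fun x hx a ha hax ↦ ⟨?_, ?_⟩⟩
  · have hxa : 0 ≤ x - a := by linarith
    have hlogx : 0 < log x := log_pos (by linarith)
    have hcut : (max b a - a) ^ s ≤ (b / x₀) ^ s * (x - a) ^ s := by
      rw [← mul_rpow (by positivity) hxa]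
      refine rpow_le_rpow (sub_nonneg.2 (le_max_right b a)) ?_ hs.le
      exact (max_sub_le_div_mul_sub ha hax hb₀ (by linarith)).trans (by gcongr)
    calc (1 - (b / x₀) ^ s) / s * (x - a) ^ s / log x
        = ((x - a) ^ s - (b / x₀) ^ s * (x - a) ^ s) / s / log x := by ring
      _ ≤ ((x - a) ^ s - (max b a - a) ^ s) / s / log x := by gcongr
      _ ≤ _ := le_integral_sub_rpow_div_log hs (le_max_right b a) (hb.trans_le (le_max_left b a))
          (max_le (by linarith) hax)
  · exact integral_sub_rpow_div_log_le hs ha (le_max_right b a) hb (le_max_left b a)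
      (max_le (by linarith) hax)

end SubRpowDivLog

theorem integral_one_sub_div_rpow_neg_half_div_sqrt_mul_log {r A x : ℝ} (hA : 0 < A)
    (hrA : r ^ 2 / 4 ≤ A) (hAx : A ≤ x) :
    ∫ t in A..x, (1 - r ^ 2 / (4 * t)) ^ (-(1 : ℝ) / 2) / (2 * √t * log t) =
      1 / 2 * ∫ t in A..x, (t - r ^ 2 / 4) ^ ((1 : ℝ) / 2 - 1) / log t := by
  rw [← intervalIntegral.integral_const_mul]
  refine integral_congr fun t ht ↦ ?_
  rw [uIcc_of_le hAx] at ht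
  have hexp : (1 : ℝ) / 2 - 1 = -1 / 2 := by norm_num
  rw [hexp, ← one_sub_div_rpow_neg_half_div_sqrt (hA.trans_le ht.1) (hrA.trans ht.1),
    div_div (r ^ 2)]
  ring

theorem sqrt_four_mul_sub_sq (x r : ℝ) :
    √(4 * x - r ^ 2) = 2 * (x - r ^ 2 / 4) ^ ((1 : ℝ) / 2) := by
  rw [← sqrt_eq_rpow, show 4 * x - r ^ 2 = 2 ^ 2 * (x - r ^ 2 / 4) by ring,
    sqrt_mul (by norm_num), sqrt_sq (by norm_num)]

theorem refined_main_term_order_CM_general {b x₀ : ℝ} (hb : 1 < b) (hbx₀ : b < x₀) :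
    ∃ c C : ℝ, 0 < c ∧ 0 < C ∧ ∀ x : ℝ, x₀ ≤ x → ∀ r : ℝ, r ^ 2 ≤ 4 * x →
      c * √(4 * x - r ^ 2) / log x
        ≤ (∫ t in (max b (r ^ 2 / 4))..x,
            (1 - r ^ 2 / (4 * t)) ^ (-(1 : ℝ) / 2) / (2 * √t * log t)) ∧
      (∫ t in (max b (r ^ 2 / 4))..x,
          (1 - r ^ 2 / (4 * t)) ^ (-(1 : ℝ) / 2) / (2 * √t * log t))
        ≤ C * √(4 * x - r ^ 2) / log x := by
  obtain ⟨c, C, hc, hC, hbounds⟩ :=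
    exists_integral_sub_rpow_div_log_bounds (s := 1 / 2) (by norm_num) hb hbx₀
  refine ⟨c / 4, C / 4, by positivity, by positivity, fun x hx r hr ↦ ?_⟩
  have hrx : r ^ 2 / 4 ≤ x := by linarith
  have hscale (k : ℝ) : k / 4 * √(4 * x - r ^ 2) / log x =
      1 / 2 * (k * (x - r ^ 2 / 4) ^ ((1 : ℝ) / 2) / log x) := by
    rw [sqrt_four_mul_sub_sq]; ring
  obtain ⟨hlower, hupper⟩ := hbounds x hx (r ^ 2 / 4) (by positivity) hrx
  rw [integral_one_sub_div_rpow_neg_half_div_sqrt_mul_log (lt_max_of_lt_left (by linarith))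
    (le_max_right _ _) (max_le (by linarith) hrx), hscale, hscale]
  constructor <;> gcongr

/-- There are absolute constants `c, C > 0` such that for all real `x ≥ 16` and real `r` with
`r² ≤ 4x`, `∫_{max(2,r²/4)}^x (1 − r²/(4t))^{−1/2}/(2√t log t) dt` is between
`c √(4x − r²)/log x` and `C √(4x − r²)/log x`. -/
theorem refined_main_term_order_CM :
    ∃ c C : ℝ, 0 < c ∧ 0 < C ∧ ∀ x : ℝ, 16 ≤ x → ∀ r : ℝ, r ^ 2 ≤ 4 * x →
      c * Real.sqrt (4 * x - r ^ 2) / Real.log x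
        ≤ (∫ t in (max 2 (r ^ 2 / 4))..x,
            (1 - r ^ 2 / (4 * t)) ^ (-(1 : ℝ) / 2) / (2 * Real.sqrt t * Real.log t)) ∧
      (∫ t in (max 2 (r ^ 2 / 4))..x,
          (1 - r ^ 2 / (4 * t)) ^ (-(1 : ℝ) / 2) / (2 * Real.sqrt t * Real.log t))
        ≤ C * Real.sqrt (4 * x - r ^ 2) / Real.log x :=
  refined_main_term_order_CM_general one_lt_two (by norm_num)
end
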